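/- arXiv:1107.1419 — 2 statements merged into one kernel-verified Lean document; each statement's English description precedes it below -/
import Mathlib

section
/- Any connected compact subset C of the plane can be approximated arbitrarily well in Hausdorff distance by the closure of a smooth bounded simply connected domain; more precisely, for every ε > 0 there exists a bounded simply connected open set O with smooth (C^∞ Jordan curve) boundary such that the Hausdorff distance between C and the closure of O is less than ε. -/
open Metric Filter

namespace SmoothApprox

open scoped Topology Pointwise

abbrev Pl := EuclideanSpace ℝ (Fin 2)

/-- A smooth homeomorphism of the plane with injective differential, supported in `V`. -/
def Good (V : Set Pl) (Ψ : Pl ≃ₜ Pl) : Prop :=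
  ContDiff ℝ (⊤ : ℕ∞) Ψ ∧ (∀ x, Function.Injective (fderiv ℝ Ψ x)) ∧ ∀ x, x ∉ V → Ψ x = x

/-- `y` is reachable from `x` by a diffeomorphism supported in `V`. -/
def Reach (V : Set Pl) (x y : Pl) : Prop := ∃ Ψ : Pl ≃ₜ Pl, Good V Ψ ∧ Ψ x = y

lemma Good.refl (V : Set Pl) : Good V (Homeomorph.refl Pl) := by
  refine ⟨contDiff_id, fun x => ?_, fun x _ => rfl⟩
  have : fderiv ℝ (Homeomorph.refl Pl) x = ContinuousLinearMap.id ℝ Pl := fderiv_id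
  rw [this]
  exact fun a b h => h

lemma Good.mono {V W : Set Pl} (h : V ⊆ W) {Ψ : Pl ≃ₜ Pl} (H : Good V Ψ) : Good W Ψ :=
  ⟨H.1, H.2.1, fun x hx => H.2.2 x (fun hx' => hx (h hx'))⟩

lemma Good.trans {V : Set Pl} {Ψ Θ : Pl ≃ₜ Pl} (H : Good V Ψ) (H' : Good V Θ) :
    Good V (Ψ.trans Θ) := by
  refine ⟨H'.1.comp H.1, fun x => ?_, fun x hx => ?_⟩
  · have : fderiv ℝ (Ψ.trans Θ) x = (fderiv ℝ Θ (Ψ x)).comp (fderiv ℝ Ψ x) :=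
      fderiv_comp x (H'.1.differentiable (by simp) _) (H.1.differentiable (by simp) _)
    rw [this]
    exact (H'.2.1 _).comp (H.2.1 _)
  · simp [H.2.2 x hx, H'.2.2 x hx]

lemma Good.mapsTo {V : Set Pl} {Ψ : Pl ≃ₜ Pl} (H : Good V Ψ) {x : Pl} (hx : x ∈ V) :
    Ψ x ∈ V := by
  by_contra h
  have := Ψ.injective (H.2.2 _ h)
  rw [this] at h
  exact h hx

lemma Reach.trans {V : Set Pl} {x y z : Pl} (h : Reach V x y) (h' : Reach V y z) :
    Reach V x z := by
  obtain ⟨Ψ, h1, rfl⟩ := h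
  obtain ⟨Θ, h2, rfl⟩ := h'
  exact ⟨Ψ.trans Θ, h1.trans h2, rfl⟩

/-- A small push. -/
lemma exists_push {V : Set Pl} (φ : Pl → ℝ) (hφ : ContDiff ℝ (⊤ : ℕ∞) φ) (K : NNReal)
    (hK : LipschitzWith K φ) (hV : ∀ x, x ∉ V → φ x = 0) (v : Pl) (hv : K * ‖v‖ < 1 / 2) :
    ∃ Ψ : Pl ≃ₜ Pl, Good V Ψ ∧ ∀ x, Ψ x = x + φ x • v := by
  let f : Pl → Pl := fun x => x + φ x • v
  have happ : ApproximatesLinearOn f ((ContinuousLinearEquiv.refl ℝ Pl : Pl ≃L[ℝ] Pl) : Pl →L[ℝ] Pl)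
      Set.univ (1 / 2 : NNReal) := by
    intro x _ y _
    have e : f x - f y - ((ContinuousLinearEquiv.refl ℝ Pl : Pl ≃L[ℝ] Pl) : Pl →L[ℝ] Pl) (x - y)
        = (φ x - φ y) • v := by
      simp only [f, ContinuousLinearEquiv.coe_refl, ContinuousLinearMap.id_apply, sub_smul]
      abel
    rw [e, norm_smul]
    have h1 := hK.norm_sub_le x y
    have : ‖φ x - φ y‖ * ‖v‖ ≤ (K * ‖x - y‖) * ‖v‖ := by gcongr
    have h3 : (K * ‖v‖) * ‖x - y‖ ≤ 1 / 2 * ‖x - y‖ := by gcongr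
    push_cast
    nlinarith
  have hc : Subsingleton Pl ∨ (1 / 2 : NNReal) <
      ‖((ContinuousLinearEquiv.refl ℝ Pl : Pl ≃L[ℝ] Pl).symm : Pl →L[ℝ] Pl)‖₊⁻¹ := by
    right
    have : ‖((ContinuousLinearEquiv.refl ℝ Pl : Pl ≃L[ℝ] Pl).symm : Pl →L[ℝ] Pl)‖₊ = 1 := by
      apply NNReal.eq
      simp only [ContinuousLinearEquiv.refl_symm, ContinuousLinearEquiv.coe_refl, coe_nnnorm]
      exact ContinuousLinearMap.norm_id
    rw [this, inv_one, ← NNReal.coe_lt_coe]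
    push_cast
    norm_num
  have hf : ∀ x, (happ.toHomeomorph f hc) x = x + φ x • v := fun x => rfl
  refine ⟨happ.toHomeomorph f hc, ⟨?_, ?_, ?_⟩, hf⟩
  · exact contDiff_id.add (hφ.smul contDiff_const)
  · intro x
    have hd : HasFDerivAt φ (fderiv ℝ φ x) x := (hφ.differentiable (by simp) x).hasFDerivAt
    have h2 : HasFDerivAt (happ.toHomeomorph f hc)
        (ContinuousLinearMap.id ℝ Pl + (fderiv ℝ φ x).smulRight v) x :=
      (hasFDerivAt_id x).add (hd.smul_const v)
    rw [h2.fderiv, injective_iff_map_eq_zero]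
    intro h hh
    have h3 : h = - (fderiv ℝ φ x h • v) := by
      apply eq_neg_of_add_eq_zero_left
      simpa using hh
    have h4 : ‖h‖ = ‖fderiv ℝ φ x h‖ * ‖v‖ := by
      conv_lhs => rw [h3]
      rw [norm_neg, norm_smul]
    have h5 : ‖fderiv ℝ φ x h‖ ≤ K * ‖h‖ :=
      (ContinuousLinearMap.le_opNorm _ _).trans
        (by gcongr; exact norm_fderiv_le_of_lipschitz ℝ hK)
    have h6 : ‖fderiv ℝ φ x h‖ * ‖v‖ ≤ (K * ‖h‖) * ‖v‖ := by gcongr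
    have h7 : (K * ‖v‖) * ‖h‖ ≤ 1 / 2 * ‖h‖ := by gcongr
    have : ‖h‖ ≤ 0 := by nlinarith
    exact norm_le_zero_iff.1 this
  · intro x hx
    rw [hf, hV x hx]; simp

lemma reach_local {V : Set Pl} (hV : IsOpen V) {x : Pl} (hx : x ∈ V) :
    ∀ᶠ y in 𝓝 x, Reach V x y ∧ Reach V y x := by
  obtain ⟨r, hr, hrV⟩ := Metric.isOpen_iff.1 hV x hx
  let φ : ContDiffBump x := ⟨r / 2, r, by linarith, by linarith⟩
  obtain ⟨K, hK⟩ := (φ.contDiff (n := 1)).lipschitzWith_of_hasCompactSupport (𝕂 := ℝ)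
    φ.hasCompactSupport (by simp)
  have hφV : ∀ z, z ∉ V → φ z = 0 := by
    intro z hz
    by_contra h
    have : z ∈ Function.support φ := h
    rw [φ.support_eq] at this
    exact hz (hrV this)
  have hsm : ∀ᶠ y in 𝓝 x, (K : ℝ) * ‖y - x‖ < 1 / 2 := by
    have : Tendsto (fun y : Pl => (K : ℝ) * ‖y - x‖) (𝓝 x) (𝓝 ((K : ℝ) * ‖x - x‖)) := by
      apply Continuous.tendsto
      fun_prop
    rw [sub_self, norm_zero, mul_zero] at this
    exact this.eventually (gt_mem_nhds (by norm_num))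
  have hb : ∀ᶠ y in 𝓝 x, y ∈ closedBall x (r / 2) := closedBall_mem_nhds x (by linarith)
  filter_upwards [hsm, hb] with y h1 h2
  constructor
  · obtain ⟨Ψ, hΨ, h⟩ := exists_push φ φ.contDiff K hK hφV (y - x) h1
    refine ⟨Ψ, hΨ, ?_⟩
    rw [h, φ.one_of_mem_closedBall (mem_closedBall_self (by change 0 ≤ r / 2; linarith))]
    simp
  · obtain ⟨Ψ, hΨ, h⟩ := exists_push φ φ.contDiff K hK hφV (x - y) (by rwa [norm_sub_rev])
    refine ⟨Ψ, hΨ, ?_⟩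
    rw [h, φ.one_of_mem_closedBall h2]
    simp

lemma reach_preconn {V W : Set Pl} (hV : IsOpen V) (hW : IsPreconnected W) (hWV : W ⊆ V)
    {x y : Pl} (hx : x ∈ W) (hy : y ∈ W) : Reach V x y :=
  hW.induction₂' (Reach V) (fun _ hz => (reach_local hV (hWV hz)).filter_mono nhdsWithin_le_nhds)
    (fun _ _ _ _ _ _ h h' => h.trans h') hx hy

lemma one_lt_rank : 1 < Module.rank ℝ Pl := by
  rw [← Module.finrank_eq_rank, finrank_euclideanSpace_fin]
  norm_num

lemma preconn_punctured (x : Pl) (r : ℝ) : IsPreconnected (ball x r \ {x}) := by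
  have h : IsPreconnected ((sphere (0 : Pl) 1) ×ˢ Set.Ioo (0 : ℝ) r) :=
    (isPreconnected_sphere one_lt_rank 0 1).prod isPreconnected_Ioo
  have h2 := h.image (fun p => x + p.2 • p.1) (by fun_prop)
  convert h2 using 1
  ext y
  simp only [Set.mem_sdiff, mem_ball, Set.mem_singleton_iff, Set.mem_image, Set.mem_prod,
    mem_sphere_zero_iff_norm, Set.mem_Ioo, Prod.exists]
  constructor
  · rintro ⟨h1, h2⟩
    have h3 : 0 < ‖y - x‖ := norm_pos_iff.2 (sub_ne_zero.2 h2)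
    refine ⟨‖y - x‖⁻¹ • (y - x), ‖y - x‖, ⟨?_, h3, by rwa [← dist_eq_norm]⟩, ?_⟩
    · rw [norm_smul, norm_inv, norm_norm, inv_mul_cancel₀ h3.ne']
    · rw [smul_smul, mul_inv_cancel₀ h3.ne']; simp
  · rintro ⟨s, t, ⟨h1, h2, h3⟩, rfl⟩
    constructor
    · simp [norm_smul, h1, abs_of_pos h2, h3]
    · intro h
      have : t • s = 0 := by simpa using h
      rcases smul_eq_zero.1 this with h | h
      · exact h2.ne' h
      · rw [h] at h1; simp at h1

lemma punct_mem {x y : Pl} {r : ℝ} (hy : y ∈ ball x r) :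
    ∀ᶠ z in 𝓝[≠] y, z ∈ ball x r \ {x} := by
  have h1 : ∀ᶠ z in 𝓝[≠] y, z ∈ ball x r :=
    mem_nhdsWithin_of_mem_nhds (isOpen_ball.mem_nhds hy)
  have h2 : ∀ᶠ z in 𝓝[≠] y, z ≠ x := by
    rcases eq_or_ne y x with rfl | h
    · exact self_mem_nhdsWithin
    · exact mem_nhdsWithin_of_mem_nhds (isOpen_ne.mem_nhds h)
  filter_upwards [h1, h2] with z a b using ⟨a, b⟩

lemma reach_diff {U : Set Pl} (hU : IsOpen U) (hUc : IsPreconnected U) (F : Finset Pl)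
    {x y : Pl} (hx : x ∈ U \ F) (hy : y ∈ U \ F) : Reach (U \ F) x y := by
  have hV : IsOpen (U \ F) := hU.sdiff F.finite_toSet.isClosed
  have key : ∀ᶠ x' in 𝓝[≠] x, ∀ᶠ y' in 𝓝[≠] y, Reach (U \ F) x' y' := by
    refine hUc.induction₂' (fun x y => ∀ᶠ x' in 𝓝[≠] x, ∀ᶠ y' in 𝓝[≠] y, Reach (U \ F) x' y')
      ?_ ?_ hx.1 hy.1
    · intro z hz
      have hz' : U \ ((F.erase z : Finset Pl) : Set Pl) ∈ 𝓝 z :=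
        (hU.sdiff (F.erase z).finite_toSet.isClosed).mem_nhds ⟨hz, by simp⟩
      obtain ⟨r, hr, hrV⟩ := Metric.mem_nhds_iff.1 hz'
      have hsub : ball z r \ {z} ⊆ U \ F := by
        rintro w ⟨h1, h2⟩
        have := hrV h1
        refine ⟨this.1, fun h => this.2 ?_⟩
        simp only [Finset.coe_erase]
        exact ⟨h, h2⟩
      have hR : ∀ a ∈ ball z r, ∀ b ∈ ball z r,
          ∀ᶠ x' in 𝓝[≠] a, ∀ᶠ y' in 𝓝[≠] b, Reach (U \ F) x' y' := by
        intro a ha b hb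
        filter_upwards [punct_mem ha] with x' hx'
        filter_upwards [punct_mem hb] with y' hy'
        exact reach_preconn hV (preconn_punctured z r) hsub hx' hy'
      have hb : ∀ᶠ w in 𝓝[U] z, w ∈ ball z r :=
        mem_nhdsWithin_of_mem_nhds (ball_mem_nhds z hr)
      filter_upwards [hb] with w hw
      exact ⟨hR z (mem_ball_self hr) w hw, hR w hw z (mem_ball_self hr)⟩
    · intro a b c _ _ _ h1 h2
      filter_upwards [h1] with x' hx'
      obtain ⟨y', h3, h4⟩ := (hx'.and h2).exists
      filter_upwards [h4] with z' hz' using h3.trans hz'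
  have h1 : ∀ᶠ x' in 𝓝[≠] x, Reach (U \ F) x x' ∧ Reach (U \ F) x' x :=
    (reach_local hV hx).filter_mono nhdsWithin_le_nhds
  have h2 : ∀ᶠ y' in 𝓝[≠] y, Reach (U \ F) y y' ∧ Reach (U \ F) y' y :=
    (reach_local hV hy).filter_mono nhdsWithin_le_nhds
  obtain ⟨x', hx', hxx⟩ := (key.and h1).exists
  obtain ⟨y', hy', hyy⟩ := (hx'.and h2).exists
  exact (hxx.1.trans hy').trans hyy.2

lemma exists_swallow {U : Set Pl} (hU : IsOpen U) (hUc : IsPreconnected U) {D : Set Pl}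
    (hDU : D ⊆ U) (hD : D.Infinite) (F : Finset Pl) (hF : (F : Set Pl) ⊆ U) :
    ∃ Ψ : Pl ≃ₜ Pl, Good U Ψ ∧ ∀ x ∈ F, x ∈ Ψ '' D := by
  classical
  induction F using Finset.induction_on with
  | empty => exact ⟨_, Good.refl U, by simp⟩
  | insert a F ha ih =>
    rw [Finset.coe_insert, Set.insert_subset_iff] at hF
    obtain ⟨Ψ, hΨ, h⟩ := ih hF.2
    obtain ⟨_, ⟨q, hq, rfl⟩, hqF⟩ :=
      (hD.image Ψ.injective.injOn).exists_notMem_finset F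
    obtain ⟨Θ, hΘ, hΘa⟩ := reach_diff hU hUc F ⟨hΨ.mapsTo (hDU hq), by simpa using hqF⟩
      ⟨hF.1, by simpa using ha⟩
    refine ⟨Ψ.trans Θ, hΨ.trans (hΘ.mono Set.sdiff_subset), fun x hx => ?_⟩
    rcases Finset.mem_insert.1 hx with rfl | hx
    · exact ⟨q, hq, hΘa⟩
    · obtain ⟨d, hd, hdx⟩ := h x hx
      refine ⟨d, hd, ?_⟩
      change Θ (Ψ d) = x
      rw [hdx]
      exact hΘ.2.2 x (fun h => h.2 hx)

lemma preconn_thickening {C : Set Pl} (hC : IsPreconnected C) (δ : ℝ) :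
    IsPreconnected (thickening δ C) := by
  rw [← add_ball_zero, ← Set.add_image_prod]
  exact (hC.prod isPreconnected_ball).image _ (by fun_prop)

/-- The isometry from the complex numbers. -/
noncomputable def L : ℂ ≃ₗᵢ[ℝ] Pl := Complex.orthonormalBasisOneI.repr

/-- The standard circle. -/
noncomputable def circ (x : Pl) (r : ℝ) (t : ℝ) : Pl :=
  x + L (r * Complex.exp (t * (2 * Real.pi * Complex.I)))

lemma circ_contDiff (x : Pl) (r : ℝ) : ContDiff ℝ (⊤ : ℕ∞) (circ x r) := by
  have h : ContDiff ℝ (⊤ : ℕ∞)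
      (fun t : ℝ => (r : ℂ) * Complex.exp (t * (2 * Real.pi * Complex.I))) :=
    contDiff_const.mul ((Complex.ofRealCLM.contDiff.mul contDiff_const).cexp)
  exact contDiff_const.add (L.toContinuousLinearEquiv.contDiff.comp h)

lemma circ_deriv (x : Pl) {r : ℝ} (hr : 0 < r) (t : ℝ) :
    ∃ v, v ≠ 0 ∧ HasDerivAt (circ x r) v t := by
  have h0 : HasDerivAt (fun t : ℝ => (t : ℂ) * (2 * Real.pi * Complex.I))
      (1 * (2 * Real.pi * Complex.I)) t :=
    (Complex.ofRealCLM.hasDerivAt (x := t)).mul_const _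
  have h1 := (h0.cexp).const_mul (r : ℂ)
  have h2 := (L.toContinuousLinearEquiv.toContinuousLinearMap.hasFDerivAt
    (x := (r : ℂ) * Complex.exp (t * (2 * Real.pi * Complex.I)))).comp_hasDerivAt t h1
  refine ⟨_, ?_, h2.const_add x⟩
  intro h
  have h3 := L.toContinuousLinearEquiv.map_eq_zero_iff.1 h
  simp [hr.ne', Real.pi_ne_zero] at h3

lemma circ_periodic (x : Pl) (r : ℝ) : Function.Periodic (circ x r) 1 := by
  intro t
  unfold circ
  congr 3
  push_cast
  rw [add_mul, one_mul, Complex.exp_periodic]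

lemma circ_inj (x : Pl) {r : ℝ} (hr : 0 < r) : ∀ s ∈ Set.Ico (0:ℝ) 1, ∀ t ∈ Set.Ico (0:ℝ) 1,
    circ x r s = circ x r t → s = t := by
  intro s hs t ht h
  have h1 := L.injective (add_left_cancel h)
  have h2 := mul_left_cancel₀ (by exact_mod_cast hr.ne') h1
  obtain ⟨n, hn⟩ := Complex.exp_eq_exp_iff_exists_int.1 h2
  rw [← add_mul] at hn
  have h3 := mul_right_cancel₀ (by simp [Real.pi_ne_zero]) hn
  have h4 : s = t + n := by exact_mod_cast h3
  have h5 : (n : ℝ) < 1 := by linarith [hs.2, ht.1]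
  have h6 : (-1 : ℝ) < n := by linarith [hs.1, ht.2]
  have h7 : n < 1 := by exact_mod_cast h5
  have h8 : -1 < n := by exact_mod_cast h6
  have h9 : n = 0 := by omega
  rw [h4, h9]; simp

lemma circ_range (x : Pl) {r : ℝ} (hr : 0 < r) : Set.range (circ x r) = sphere x r := by
  ext y
  constructor
  · rintro ⟨t, rfl⟩
    have : (t : ℂ) * (2 * Real.pi * Complex.I) = ((t * (2 * Real.pi) : ℝ) : ℂ) * Complex.I := by
      push_cast; ring
    rw [mem_sphere, dist_eq_norm, circ, add_sub_cancel_left, L.norm_map, norm_mul, this,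
      Complex.norm_exp_ofReal_mul_I]
    simp [abs_of_pos hr]
  · intro hy
    obtain ⟨z, hz⟩ := L.surjective (y - x)
    have hzn : ‖z‖ = r := by
      rw [← L.norm_map, hz, ← dist_eq_norm]; exact hy
    refine ⟨z.arg / (2 * Real.pi), ?_⟩
    have : ((z.arg / (2 * Real.pi) : ℝ) : ℂ) * (2 * Real.pi * Complex.I) = z.arg * Complex.I := by
      have : (Real.pi : ℂ) ≠ 0 := by exact_mod_cast Real.pi_ne_zero
      push_cast
      field_simp
    rw [circ, this, ← hzn, Complex.norm_mul_exp_arg_mul_I, hz]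
    simp

end SmoothApprox

open SmoothApprox in
/-- Any nonempty connected compact subset `C` of the plane can be approximated arbitrarily
well in Hausdorff distance by the closure of a bounded simply connected open set whose
boundary is a smooth (`C^∞`, regular, injective) Jordan curve. -/
theorem stmt_0 (C : Set (EuclideanSpace ℝ (Fin 2)))
    (hCcpt : IsCompact C) (hCconn : IsConnected C) (hCne : C.Nonempty) :
    ∀ ε > (0 : ℝ), ∃ O : Set (EuclideanSpace ℝ (Fin 2)),
      IsOpen O ∧ Bornology.IsBounded O ∧ O.Nonempty ∧ SimplyConnectedSpace O ∧
      (∃ γ : ℝ → EuclideanSpace ℝ (Fin 2),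
        ContDiff ℝ (⊤ : ℕ∞) γ ∧ Function.Periodic γ 1 ∧
        (∀ s ∈ Set.Ico (0:ℝ) 1, ∀ t ∈ Set.Ico (0:ℝ) 1, γ s = γ t → s = t) ∧
        (∀ t, deriv γ t ≠ 0) ∧ frontier O = Set.range γ) ∧
      hausdorffDist C (closure O) < ε := by
  intro ε hε
  obtain ⟨x0, hx0⟩ := hCne
  have hδ : 0 < ε / 2 := by linarith
  set U : Set (EuclideanSpace ℝ (Fin 2)) := thickening (ε / 2) C with hUdef
  have hU : IsOpen U := isOpen_thickening
  have hUc : IsPreconnected U := preconn_thickening hCconn.isPreconnected _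
  obtain ⟨t, htC, htf, htcov⟩ := hCcpt.finite_cover_balls hδ
  have hball : ball x0 (ε / 2) ⊆ U := ball_subset_thickening hx0 _
  set r := ε / 4 with hr
  have hr0 : 0 < r := by rw [hr]; linarith
  have hcb : closedBall x0 r ⊆ U := (closedBall_subset_ball (by rw [hr]; linarith)).trans hball
  have hinf : (ball x0 r).Infinite :=
    infinite_of_mem_nhds x0 (ball_mem_nhds x0 hr0)
  obtain ⟨Ψ, hΨ, hsw⟩ := exists_swallow hU hUc (ball_subset_closedBall.trans hcb) hinf
    htf.toFinset (by
      rw [htf.coe_toFinset]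
      exact htC.trans (self_subset_thickening hδ C))
  have hcl : closure (Ψ '' ball x0 r) = Ψ '' closedBall x0 r := by
    rw [← Ψ.image_closure, closure_ball x0 hr0.ne']
  refine ⟨Ψ '' ball x0 r, Ψ.isOpenMap _ isOpen_ball, ?_, ?_, ?_, ?_, ?_⟩
  · exact (((isCompact_closedBall x0 r).image Ψ.continuous).isBounded).subset
      (Set.image_mono ball_subset_closedBall)
  · exact ⟨_, x0, mem_ball_self hr0, rfl⟩
  · have : ContractibleSpace (ball x0 r) := contractibleSpace_ball hr0
    have : ContractibleSpace (Ψ '' ball x0 r) := (Ψ.image (ball x0 r)).symm.contractibleSpace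
    infer_instance
  · refine ⟨Ψ ∘ circ x0 r, hΨ.1.comp (circ_contDiff x0 r), ?_, ?_, ?_, ?_⟩
    · intro s
      simp only [Function.comp, circ_periodic x0 r s]
    · intro s hs u hu h
      exact circ_inj x0 hr0 s hs u hu (Ψ.injective h)
    · intro s
      obtain ⟨v, hv, hd⟩ := circ_deriv x0 hr0 s
      have h1 := ((hΨ.1.differentiable (by simp) (circ x0 r s)).hasFDerivAt).comp_hasDerivAt s hd
      rw [h1.deriv]
      intro h
      exact hv (hΨ.2.1 _ (by rw [h, map_zero]))
    · rw [← Ψ.image_frontier, frontier_ball x0 hr0.ne', Set.range_comp, circ_range x0 hr0]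
  · refine lt_of_le_of_lt (hausdorffDist_le_of_mem_dist hδ.le ?_ ?_) (by linarith : ε / 2 < ε)
    · intro x hx
      obtain ⟨y, hy, hxy⟩ := Set.mem_iUnion₂.1 (htcov hx)
      exact ⟨y, subset_closure (hsw y (by simpa using hy)), (mem_ball.1 hxy).le⟩
    · intro x hx
      rw [hcl] at hx
      obtain ⟨z, hz, rfl⟩ := hx
      obtain ⟨y, hy, hxy⟩ := mem_thickening_iff.1 (hΨ.mapsTo (hcb hz))
      exact ⟨y, hy, hxy.le⟩
end

section
/- Harmonic functions with locally square-integrable gradient in an exterior planar domain are bounded with decaying gradient: if ψ is harmonic on {|x| > R} ⊂ ℝ² and ∇ψ ∈ L²({|x| > R}), then there exists a constant c such that ψ(x) = c + O(1/|x|) and |∇ψ(x)| = O(1/|x|²) as |x| → ∞. -/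
open MeasureTheory Filter

theorem aux_opnorm (L : ℂ →L[ℝ] ℝ) : ‖L‖ = ‖((L 1 : ℂ) - Complex.I * (L Complex.I : ℂ))‖ := by
  set g : ℂ := (L 1 : ℂ) - Complex.I * (L Complex.I : ℂ) with hg
  have hgr : g.re = L 1 := by simp [hg]
  have hgi : g.im = - L Complex.I := by simp [hg]
  have h : ∀ v : ℂ, L v = (g * v).re := by
    intro v
    have : v = v.re • (1 : ℂ) + v.im • Complex.I := by simp
    conv_lhs => rw [this]
    rw [map_add, map_smul, map_smul, Complex.mul_re, hgr, hgi]
    simp only [smul_eq_mul]; ring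
  apply le_antisymm
  · refine L.opNorm_le_bound (norm_nonneg _) fun v => ?_
    rw [h v, ← norm_mul, Real.norm_eq_abs]
    exact Complex.abs_re_le_norm _
  · by_cases h0 : g = 0
    · simp [h0]
    have h1 := L.le_opNorm (starRingEnd ℂ g)
    rw [h, Complex.mul_conj, Complex.norm_conj, Complex.ofReal_re, Complex.normSq_eq_norm_sq,
      Real.norm_eq_abs, abs_of_nonneg (by positivity), sq] at h1
    exact le_of_mul_le_mul_right h1 (norm_pos_iff.2 h0)

theorem aux_area (f : ℂ → ℂ) (z : ℂ) (r : ℝ) (hr : 0 < r)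
    (hf : DifferentiableOn ℂ f (Metric.ball z r))
    (hi : IntegrableOn f (Metric.ball z r)) :
    r ^ 2 * ‖f z‖ ≤ ∫ w in Metric.ball z r, ‖f w‖ := by
  rw [← ENNReal.ofReal_le_ofReal_iff (by positivity),
    ofReal_integral_norm_eq_lintegral_enorm hi]
  rw [← lintegral_indicator Metric.isOpen_ball.measurableSet,
    ← lintegral_add_left_eq_self _ z, ← Complex.lintegral_comp_polarCoord_symm]
  set G : ℂ → ENNReal := (Metric.ball z r).indicator (fun w => ‖f w‖ₑ) with hG
  have hGm : Measurable G := by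
    classical
    have h1 := hf.continuousOn.enorm
    have h2 := h1.measurable_piecewise (continuousOn_const (c := (0 : ENNReal)) (s := (Metric.ball z r)ᶜ))
      measurableSet_ball
    rw [hG, ← Set.piecewise_eq_indicator]
    exact h2
  rw [polarCoord_target, Measure.volume_eq_prod, ← Measure.prod_restrict, lintegral_prod]
  swap
  · apply Measurable.aemeasurable
    have h2 : Measurable fun p : ℝ × ℝ => (Complex.polarCoord.symm p) := by
      simp only [Complex.polarCoord_symm_apply]
      fun_prop
    fun_prop
  have key : ∀ ρ ∈ Set.Ioo (r/2) r, ENNReal.ofReal (r * Real.pi * ‖f z‖) ≤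
      ∫⁻ θ in Set.Ioo (-Real.pi) Real.pi,
        ENNReal.ofReal ρ • G (z + Complex.polarCoord.symm (ρ, θ)) := by
    intro ρ hρ
    have hρ0 : 0 < ρ := by linarith [hρ.1]
    have hm : Real.circleAverage f z ρ = f z := by
      apply DiffContOnCl.circleAverage
      apply hf.diffContOnCl_ball
      rw [abs_of_pos hρ0]
      exact Metric.closedBall_subset_ball hρ.2
    rw [Real.circleAverage_eq_integral_add (-Real.pi),
      intervalIntegral.integral_comp_add_right (fun θ => f (circleMap z ρ θ))] at hm
    have hm2 : ∫ θ in Set.Ioo (-Real.pi) Real.pi, f (circleMap z ρ θ) = (2 * Real.pi) • f z := by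
      rw [← hm, smul_smul, mul_inv_cancel₀ (by positivity), one_smul,
        intervalIntegral.integral_of_le (by linarith [Real.pi_pos]), integral_Ioc_eq_integral_Ioo]
      congr 3 <;> ring
    have hGe : ∀ θ : ℝ, G (z + Complex.polarCoord.symm (ρ, θ)) = ‖f (circleMap z ρ θ)‖ₑ := by
      intro θ
      have h1 : z + Complex.polarCoord.symm (ρ, θ) = circleMap z ρ θ := by
        rw [Complex.polarCoord_symm_apply, circleMap, Complex.exp_mul_I]; simp
      rw [h1, hG, Set.indicator_of_mem]
      rw [Metric.mem_ball, dist_eq_norm, circleMap_sub_center, norm_circleMap_zero,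
        abs_of_pos hρ0]
      exact hρ.2
    simp only [hGe, smul_eq_mul]
    rw [lintegral_const_mul' _ _ ENNReal.ofReal_ne_top]
    calc ENNReal.ofReal (r * Real.pi * ‖f z‖) ≤ ENNReal.ofReal (ρ * (2 * Real.pi * ‖f z‖)) := by
          apply ENNReal.ofReal_le_ofReal
          have : 0 ≤ Real.pi * ‖f z‖ := by positivity
          nlinarith [hρ.1]
      _ = ENNReal.ofReal ρ * ‖∫ θ in Set.Ioo (-Real.pi) Real.pi, f (circleMap z ρ θ)‖ₑ := by
          rw [hm2, ENNReal.ofReal_mul hρ0.le, ← ofReal_norm, norm_smul, Real.norm_eq_abs,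
            abs_of_pos (by positivity)]
      _ ≤ _ := by gcongr; exact enorm_integral_le_lintegral_enorm _
  calc ENNReal.ofReal (r ^ 2 * ‖f z‖) ≤
      ∫⁻ ρ in Set.Ioo (r/2) r, ENNReal.ofReal (r * Real.pi * ‖f z‖) := by
        rw [setLIntegral_const, Real.volume_Ioo, ← ENNReal.ofReal_mul (by positivity)]
        apply ENNReal.ofReal_le_ofReal
        have : 0 ≤ r^2 * ‖f z‖ := by positivity
        nlinarith [Real.pi_gt_three]
    _ ≤ _ := setLIntegral_mono' measurableSet_Ioo key
    _ ≤ _ := lintegral_mono_set (fun x hx => by simp at hx ⊢; linarith)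

theorem aux_decay (g : ℂ → ℂ) (R : ℝ) (hR : 0 < R)
    (hg : DifferentiableOn ℂ g {z | R < ‖z‖})
    (hi : IntegrableOn (fun z => ‖g z‖ ^ 2) {z | R < ‖z‖}) :
    Tendsto (fun z => z * g z) (Bornology.cobounded ℂ) (nhds 0) := by
  have hopen : ∀ a : ℝ, IsOpen {z : ℂ | a < ‖z‖} := fun a => isOpen_lt continuous_const continuous_norm
  have ht := tendsto_setIntegral_of_antitone (μ := volume) (f := fun z => ‖g z‖ ^ 2)
    (s := fun n : ℕ => {z : ℂ | R + n < ‖z‖}) (fun n => (hopen _).measurableSet)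
    (fun a b hab z hz => by
      have : (a:ℝ) ≤ b := by exact_mod_cast hab
      simp only [Set.mem_ofPred_eq] at hz ⊢; linarith) ⟨0, by simpa using hi⟩
  have he : (⋂ n : ℕ, {z : ℂ | R + n < ‖z‖}) = ∅ := by
    ext z
    simp only [Set.mem_iInter, Set.mem_ofPred_eq, Set.mem_empty_iff_false, iff_false, not_forall, not_lt]
    obtain ⟨n, hn⟩ := exists_nat_ge ‖z‖
    exact ⟨n, by linarith⟩
  rw [he, setIntegral_empty] at ht
  rw [tendsto_zero_iff_norm_tendsto_zero, Metric.tendsto_nhds]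
  intro ε hε
  obtain ⟨n, hn⟩ := (ht.eventually_lt_const (u := ε^2/4) (by positivity)).exists
  have hc : ∀ᶠ z in Bornology.cobounded ℂ, 2 * (R + n) < ‖z‖ :=
    tendsto_norm_cobounded_atTop.eventually_gt_atTop _
  filter_upwards [hc] with z hz
  have hn0 : (0:ℝ) ≤ n := by positivity
  have hz0 : 0 < ‖z‖ := by linarith
  have hsub : Metric.ball z (‖z‖/2) ⊆ {z : ℂ | R + n < ‖z‖} := by
    intro w hw
    rw [Metric.mem_ball, dist_eq_norm] at hw
    have := norm_sub_norm_le z w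
    rw [norm_sub_rev] at this
    simp only [Set.mem_ofPred_eq]; linarith
  have hsub2 : {z : ℂ | R + n < ‖z‖} ⊆ {z : ℂ | R < ‖z‖} := by
    intro w hw; simp only [Set.mem_ofPred_eq] at hw ⊢; linarith
  have hd : DifferentiableOn ℂ (fun w => g w ^ 2) (Metric.ball z (‖z‖/2)) :=
    (hg.mono (hsub.trans hsub2)).pow 2
  have hii : IntegrableOn (fun w => g w ^ 2) (Metric.ball z (‖z‖/2)) := by
    have h1 := hi.mono_set (hsub.trans hsub2)
    refine Integrable.mono' h1 (hd.continuousOn.aestronglyMeasurable measurableSet_ball) ?_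
    simp
  have h1 := aux_area _ z (‖z‖/2) (by positivity) hd hii
  simp only [norm_pow] at h1
  have h2 : ∫ w in Metric.ball z (‖z‖/2), ‖g w‖ ^ 2 ≤ ∫ w in {z : ℂ | R + n < ‖z‖}, ‖g w‖ ^ 2 :=
    setIntegral_mono_set (hi.mono_set hsub2) (ae_of_all _ fun _ => by positivity)
      hsub.eventuallyLE
  have h3 : (‖z‖ * ‖g z‖) ^ 2 < ε ^ 2 := by nlinarith
  rw [dist_zero_right, norm_norm, norm_mul]
  exact lt_of_pow_lt_pow_left₀ 2 hε.le h3

theorem aux_bound (g : ℂ → ℂ) (R : ℝ) (hR : 0 < R)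
    (hg : DifferentiableOn ℂ g {z | R < ‖z‖})
    (hi : IntegrableOn (fun z => ‖g z‖ ^ 2) {z | R < ‖z‖}) :
    ∃ C ρ : ℝ, 0 < C ∧ R < ρ ∧ ∀ z : ℂ, ρ ≤ ‖z‖ → ‖g z‖ ≤ C / ‖z‖ ^ 2 := by
  have ht := aux_decay g R hR hg hi
  have hopen : IsOpen {z : ℂ | R < ‖z‖} := isOpen_lt continuous_const continuous_norm
  set k : ℂ → ℂ := fun w => w⁻¹ * g w⁻¹ with hk
  have hk0 : k 0 = 0 := by simp [hk]
  have hkt : Tendsto k (nhdsWithin 0 {0}ᶜ) (nhds 0) := ht.comp tendsto_inv₀_nhdsNE_zero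
  have hkc : ContinuousAt k 0 := by
    rw [continuousAt_iff_punctured_nhds, hk0]; exact hkt
  have hkd : ∀ᶠ w in nhdsWithin (0:ℂ) {0}ᶜ, DifferentiableAt ℂ k w := by
    have h1 : ∀ᶠ w in nhdsWithin (0:ℂ) {0}ᶜ, R < ‖w⁻¹‖ :=
      (tendsto_norm_cobounded_atTop.comp tendsto_inv₀_nhdsNE_zero).eventually_gt_atTop R
    filter_upwards [h1, self_mem_nhdsWithin] with w hw hw0
    have hi : DifferentiableAt ℂ (fun w : ℂ => w⁻¹) w := differentiableAt_inv hw0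
    have hg' : DifferentiableAt ℂ g w⁻¹ := hg.differentiableAt (hopen.mem_nhds hw)
    exact hi.mul (hg'.comp w hi)
  have hka := (Complex.analyticAt_of_differentiable_on_punctured_nhds_of_continuousAt hkd hkc).differentiableAt
  have hO := hka.isBigO_sub
  simp only [hk0, sub_zero] at hO
  obtain ⟨C, hC, hO⟩ := hO.exists_pos
  have hO' := hO.bound
  rw [Metric.eventually_nhds_iff] at hO'
  obtain ⟨δ, hδ, hO'⟩ := hO'
  refine ⟨C, max (R+1) (δ⁻¹+1), hC, by linarith [le_max_left (R+1) (δ⁻¹+1)], fun z hz => ?_⟩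
  have hz1 : δ⁻¹ < ‖z‖ := by linarith [le_max_right (R+1) (δ⁻¹+1)]
  have hz0 : 0 < ‖z‖ := lt_trans (by positivity) hz1
  have := @hO' z⁻¹ (by rw [dist_zero_right, norm_inv]; exact inv_lt_of_inv_lt₀ hδ hz1)
  simp only [hk, inv_inv, norm_mul, norm_inv] at this
  rw [le_div_iff₀ (by positivity)]
  calc ‖g z‖ * ‖z‖^2 = (‖z‖ * ‖g z‖) * ‖z‖ := by ring
    _ ≤ (C * ‖z‖⁻¹) * ‖z‖ := by gcongr
    _ = C := by field_simp

theorem aux_seg (F : ℂ → ℝ) (δ C : ℝ)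
    (hd : ∀ w : ℂ, w ≠ 0 → ‖w‖ < δ → DifferentiableAt ℝ F w)
    (hb : ∀ w : ℂ, w ≠ 0 → ‖w‖ < δ → ‖fderiv ℝ F w‖ ≤ C)
    (u w : ℂ) (hu : u ≠ 0) (hw : w ≠ 0) (hu' : ‖u‖ < δ) (hw' : ‖w‖ < δ)
    (hp : 0 ≤ (w * starRingEnd ℂ u).re) : ‖F w - F u‖ ≤ C * ‖w - u‖ := by
  have hmem : ∀ x ∈ segment ℝ u w, x ≠ 0 ∧ ‖x‖ < δ := by
    intro x hx
    constructor
    · rintro rfl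
      obtain ⟨a, b, ha, hb, hab, h⟩ := hx
      have h2 : ((a • u + b • w) * starRingEnd ℂ u).re = 0 := by rw [h]; simp
      have h3 : ((a • u + b • w) * starRingEnd ℂ u) = a • (u * starRingEnd ℂ u) + b • (w * starRingEnd ℂ u) := by
        simp only [Complex.real_smul]; ring
      rw [h3, Complex.add_re, Complex.smul_re, Complex.smul_re, Complex.mul_conj, Complex.ofReal_re] at h2
      simp only [smul_eq_mul] at h2
      have hn := Complex.normSq_pos.2 hu
      have h4 : a * Complex.normSq u = 0 := by nlinarith [mul_nonneg ha hn.le, mul_nonneg hb hp]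
      have ha0 : a = 0 := by
        rcases mul_eq_zero.1 h4 with h | h
        · exact h
        · exact absurd h hn.ne'
      have hb1 : b = 1 := by linarith
      simp [ha0, hb1] at h
      exact hw h
    · have := (convex_ball (0:ℂ) δ).segment_subset (by simpa using hu') (by simpa using hw') hx
      simpa using this
  exact (convex_segment u w).norm_image_sub_le_of_norm_fderiv_le (𝕜 := ℝ)
    (fun x hx => hd x (hmem x hx).1 (hmem x hx).2)
    (fun x hx => hb x (hmem x hx).1 (hmem x hx).2) (left_mem_segment _ _ _) (right_mem_segment _ _ _)

theorem aux_two (F : ℂ → ℝ) (δ C : ℝ) (hC : 0 ≤ C)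
    (hd : ∀ w : ℂ, w ≠ 0 → ‖w‖ < δ → DifferentiableAt ℝ F w)
    (hb : ∀ w : ℂ, w ≠ 0 → ‖w‖ < δ → ‖fderiv ℝ F w‖ ≤ C)
    (u w : ℂ) (hu : u ≠ 0) (hw : w ≠ 0) (hu' : ‖u‖ < δ) (hw' : ‖w‖ < δ) :
    ‖F w - F u‖ ≤ 3 * C * (‖u‖ + ‖w‖) := by
  obtain ⟨s, hs, hs1, hs2⟩ : ∃ s : ℂ, ‖s‖ = 1 ∧ 0 ≤ (w * starRingEnd ℂ (s * u)).re ∧ s.re = 0 := by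
    rcases le_total 0 (w * starRingEnd ℂ (Complex.I * u)).re with h | h
    · exact ⟨Complex.I, by simp, h, by simp⟩
    · refine ⟨-Complex.I, by simp, ?_, by simp⟩
      rw [neg_mul, map_neg, mul_neg, Complex.neg_re]; linarith
  have hv : ‖s * u‖ = ‖u‖ := by rw [norm_mul, hs, one_mul]
  have hv0 : s * u ≠ 0 := by rw [← norm_pos_iff, hv]; exact norm_pos_iff.2 hu
  have h1 := aux_seg F δ C hd hb (s * u) w hv0 hw (by rwa [hv]) hw' hs1
  have h2 := aux_seg F δ C hd hb u (s * u) hu hv0 hu' (by rwa [hv]) (by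
    rw [mul_assoc, Complex.mul_conj, Complex.re_mul_ofReal, hs2]; simp)
  have h3 : ‖w - s * u‖ ≤ ‖w‖ + ‖u‖ := (norm_sub_le _ _).trans (by rw [hv])
  have h4 : ‖s * u - u‖ ≤ ‖u‖ + ‖u‖ := (norm_sub_le _ _).trans (by rw [hv])
  have h5 : ‖F w - F u‖ ≤ ‖F w - F (s * u)‖ + ‖F (s * u) - F u‖ := norm_sub_le_norm_sub_add_norm_sub _ _ _
  have h6 := mul_le_mul_of_nonneg_left h3 hC
  have h7 := mul_le_mul_of_nonneg_left h4 hC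
  nlinarith [mul_nonneg hC (norm_nonneg w), mul_nonneg hC (norm_nonneg u)]

theorem aux_const (u : ℂ → ℝ) (ρ C : ℝ) (hρ : 0 < ρ) (hC : 0 ≤ C)
    (hd : ∀ z : ℂ, ρ < ‖z‖ → DifferentiableAt ℝ u z)
    (hb : ∀ z : ℂ, ρ < ‖z‖ → ‖fderiv ℝ u z‖ ≤ C / ‖z‖ ^ 2) :
    ∃ c : ℝ, ∀ z : ℂ, ρ < ‖z‖ → |u z - c| ≤ 3 * C / ‖z‖ := by
  set F : ℂ → ℝ := fun w => u w⁻¹ with hF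
  have hinv : ∀ w : ℂ, w ≠ 0 → ‖w‖ < ρ⁻¹ → ρ < ‖w⁻¹‖ := by
    intro w h0 hw
    rw [norm_inv]; exact (lt_inv_comm₀ (norm_pos_iff.2 h0) hρ).1 hw
  have hder : ∀ w : ℂ, w ≠ 0 → HasFDerivAt (fun w : ℂ => w⁻¹)
      ((ContinuousLinearMap.toSpanSingleton ℂ (-(w^2)⁻¹)).restrictScalars ℝ) w := by
    intro w h0
    exact (hasDerivAt_inv h0).hasFDerivAt.restrictScalars ℝ
  have hFd : ∀ w : ℂ, w ≠ 0 → ‖w‖ < ρ⁻¹ → HasFDerivAt F ((fderiv ℝ u w⁻¹).comp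
      ((ContinuousLinearMap.toSpanSingleton ℂ (-(w^2)⁻¹)).restrictScalars ℝ)) w := by
    intro w h0 hw
    exact (hd _ (hinv w h0 hw)).hasFDerivAt.comp w (hder w h0)
  have h2 := aux_two F ρ⁻¹ C hC (fun w h0 hw => (hFd w h0 hw).differentiableAt) (by
    intro w h0 hw
    rw [(hFd w h0 hw).fderiv]
    refine (ContinuousLinearMap.opNorm_comp_le _ _).trans ?_
    rw [ContinuousLinearMap.norm_restrictScalars, ContinuousLinearMap.norm_toSpanSingleton]
    have := hb _ (hinv w h0 hw)
    have hw0 := norm_pos_iff.2 h0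
    rw [norm_neg, norm_inv, norm_pow]
    rw [norm_inv] at this
    calc _ ≤ C / ‖w‖⁻¹ ^ 2 * (‖w‖^2)⁻¹ := by gcongr
      _ = C := by field_simp)
  have hcau : Cauchy (map F (nhdsWithin 0 {0}ᶜ)) := by
    rw [Metric.cauchy_iff]
    refine ⟨inferInstance, fun ε hε => ?_⟩
    refine ⟨F '' (Metric.ball 0 (min ρ⁻¹ (ε / (6 * C + 6))) ∩ {0}ᶜ), image_mem_map ?_, ?_⟩
    · rw [Set.inter_comm]
      exact inter_mem_nhdsWithin _ (Metric.ball_mem_nhds _ (by positivity))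
    · rintro _ ⟨x, ⟨hx, hx0⟩, rfl⟩ _ ⟨y, ⟨hy, hy0⟩, rfl⟩
      simp only [Metric.mem_ball, dist_zero_right, lt_min_iff] at hx hy
      rw [dist_eq_norm]
      refine (h2 y x hy0 hx0 hy.1 hx.1).trans_lt ?_
      have ha := hx.2
      have hb := hy.2
      rw [lt_div_iff₀ (by positivity)] at ha hb
      have := norm_pos_iff.2 hx0
      nlinarith [norm_nonneg x, norm_nonneg y]
  obtain ⟨c, hc⟩ := CompleteSpace.complete hcau
  have hc : Tendsto F (nhdsWithin 0 {0}ᶜ) (nhds c) := hc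
  refine ⟨c, fun z hz => ?_⟩
  have hz0 : 0 < ‖z‖ := hρ.trans hz
  have hl : Tendsto (fun w => ‖F z⁻¹ - F w‖) (nhdsWithin 0 {0}ᶜ) (nhds ‖F z⁻¹ - c‖) :=
    (tendsto_const_nhds.sub hc).norm
  have hr : Tendsto (fun w : ℂ => 3 * C * (‖w‖ + ‖z⁻¹‖)) (nhdsWithin 0 {0}ᶜ) (nhds (3 * C * (‖(0:ℂ)‖ + ‖z⁻¹‖))) :=
    ((by fun_prop : Continuous fun w : ℂ => 3 * C * (‖w‖ + ‖z⁻¹‖)).tendsto 0).mono_left nhdsWithin_le_nhds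
  have := le_of_tendsto_of_tendsto hl hr (by
    filter_upwards [self_mem_nhdsWithin, nhdsWithin_le_nhds (Metric.ball_mem_nhds (0:ℂ) (inv_pos.2 hρ))] with w hw0 hw
    refine h2 w z⁻¹ hw0 (inv_ne_zero (norm_pos_iff.1 hz0)) (by simpa using hw) ?_
    rw [norm_inv]; exact inv_strictAnti₀ hρ hz)
  simpa [hF, Real.norm_eq_abs, div_eq_mul_inv] using this


theorem stmt_18 (R : ℝ) (hR : 0 < R) (ψ : EuclideanSpace ℝ (Fin 2) → ℝ)
    (hsm : ContDiffOn ℝ 2 ψ {x : EuclideanSpace ℝ (Fin 2) | R < ‖x‖})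
    (hharm : ∀ x ∈ {x : EuclideanSpace ℝ (Fin 2) | R < ‖x‖},
      (∑ i, fderiv ℝ (fun y => fderiv ℝ ψ y (EuclideanSpace.single i 1)) x
        (EuclideanSpace.single i 1)) = 0)
    (hL2 : IntegrableOn (fun x => ‖gradient ψ x‖ ^ 2)
      {x : EuclideanSpace ℝ (Fin 2) | R < ‖x‖} volume) :
    ∃ (c : ℝ) (M : ℝ) (R' : ℝ), R < R' ∧
      ∀ x : EuclideanSpace ℝ (Fin 2), R' ≤ ‖x‖ →
        |ψ x - c| ≤ M / ‖x‖ ∧ ‖gradient ψ x‖ ≤ M / ‖x‖ ^ 2 := by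
  set e := Complex.orthonormalBasisOneI.repr with he
  have he1 : e 1 = EuclideanSpace.single 0 1 := by
    have := Complex.orthonormalBasisOneI.repr_self 0
    simpa using this
  have heI : e Complex.I = EuclideanSpace.single 1 1 := by
    have := Complex.orthonormalBasisOneI.repr_self 1
    simpa using this
  have hopen : IsOpen {z : EuclideanSpace ℝ (Fin 2) | R < ‖z‖} :=
    isOpen_lt continuous_const continuous_norm
  have hopenC : IsOpen {z : ℂ | R < ‖z‖} := isOpen_lt continuous_const continuous_norm
  have hcd : ∀ x : EuclideanSpace ℝ (Fin 2), R < ‖x‖ → ContDiffAt ℝ 2 ψ x :=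
    fun x hx => hsm.contDiffAt (hopen.mem_nhds hx)
  set u : ℂ → ℝ := ψ ∘ e with hu
  have hgrad : ∀ x, ‖gradient ψ x‖ = ‖fderiv ℝ ψ x‖ := by
    intro x; simp [gradient]
  have hfd : ∀ z : ℂ, R < ‖z‖ → HasFDerivAt u ((fderiv ℝ ψ (e z)).comp
      (e.toContinuousLinearEquiv : ℂ →L[ℝ] EuclideanSpace ℝ (Fin 2))) z := by
    intro z hz
    have h1 := ((hcd (e z) (by simpa using hz)).differentiableAt two_ne_zero).hasFDerivAt
    exact h1.comp z e.toContinuousLinearEquiv.hasFDerivAt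
  have hnorm : ∀ z : ℂ, R < ‖z‖ → ‖fderiv ℝ u z‖ = ‖gradient ψ (e z)‖ := by
    intro z hz
    rw [hgrad, (hfd z hz).fderiv]
    exact ContinuousLinearMap.opNorm_comp_linearIsometryEquiv _ e
  have hucd : ∀ z : ℂ, R < ‖z‖ → ContDiffAt ℝ 2 u z := by
    intro z hz
    exact (hcd (e z) (by simpa using hz)).comp z e.contDiff.contDiffAt
  have hlap : ∀ z : ℂ, R < ‖z‖ → Laplacian.laplacian u z = 0 := by
    intro z hz
    have hx : R < ‖e z‖ := by simpa using hz
    have h := hharm (e z) hx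
    have hD : DifferentiableAt ℝ (fderiv ℝ ψ) (e z) :=
      ((hcd _ hx).fderiv_right (m := 1) (by norm_num)).differentiableAt one_ne_zero
    have hsec : ∀ v w : EuclideanSpace ℝ (Fin 2), fderiv ℝ (fun y => fderiv ℝ ψ y v) (e z) w =
        fderiv ℝ (fderiv ℝ ψ) (e z) w v := by
      intro v w
      rw [fderiv_clm_apply hD (differentiableAt_const _)]
      simp
    rw [Fin.sum_univ_two, hsec, hsec] at h
    rw [InnerProductSpace.laplacian_eq_iteratedFDeriv_complexPlane]
    have hcomp : iteratedFDeriv ℝ 2 u z = (iteratedFDeriv ℝ 2 ψ (e z)).compContinuousLinearMap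
        (fun _ => (e.toContinuousLinearEquiv : ℂ →L[ℝ] EuclideanSpace ℝ (Fin 2))) := by
      have := e.toContinuousLinearEquiv.iteratedFDerivWithin_comp_right ψ
        (s := Set.univ) uniqueDiffOn_univ (x := z) (Set.mem_univ _) 2
      simp only [Set.preimage_univ, iteratedFDerivWithin_univ] at this
      exact this
    beta_reduce
    rw [hcomp]
    simp only [ContinuousMultilinearMap.compContinuousLinearMap_apply, iteratedFDeriv_two_apply]
    simpa [he1, heI] using h
  have hha : ∀ z : ℂ, R < ‖z‖ → InnerProductSpace.HarmonicAt u z := by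
    intro z hz
    refine ⟨hucd z hz, ?_⟩
    filter_upwards [hopenC.mem_nhds hz] with w hw
    exact hlap w hw
  set g : ℂ → ℂ := fun z => (fderiv ℝ u z 1 : ℂ) - Complex.I * (fderiv ℝ u z Complex.I : ℂ) with hg
  have hgn : ∀ z, ‖g z‖ = ‖fderiv ℝ u z‖ := fun z => (aux_opnorm _).symm
  have hgd : DifferentiableOn ℂ g {z | R < ‖z‖} := fun z hz =>
    (HarmonicAt.differentiableAt_complex_partial (hha z hz)).differentiableWithinAt
  have hgi : IntegrableOn (fun z => ‖g z‖ ^ 2) {z | R < ‖z‖} := by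
    have hmp : MeasurePreserving e := Complex.orthonormalBasisOneI.measurePreserving_repr
    have h1 := (hmp.integrableOn_comp_preimage e.toHomeomorph.measurableEmbedding).2 hL2
    have h2 : e ⁻¹' {x : EuclideanSpace ℝ (Fin 2) | R < ‖x‖} = {z : ℂ | R < ‖z‖} := by
      ext z; simp
    rw [h2] at h1
    refine h1.congr_fun (fun z hz => ?_) hopenC.measurableSet
    simp only [Function.comp, hgn, hnorm z hz]
  obtain ⟨C, ρ, hC, hρ, hb⟩ := aux_bound g R hR hgd hgi
  obtain ⟨c, hc⟩ := aux_const u ρ C (hR.trans hρ) hC.le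
    (fun z hz => (hfd z (hρ.trans hz)).differentiableAt)
    (fun z hz => by rw [← hgn]; exact hb z hz.le)
  refine ⟨c, 3 * C, ρ + 1, by linarith, fun x hx => ?_⟩
  have hxn : ‖e.symm x‖ = ‖x‖ := by simp
  have hx0 : 0 < ‖x‖ := by linarith
  constructor
  · have := hc (e.symm x) (by rw [hxn]; linarith)
    simpa [hu] using this
  · have h1 := hb (e.symm x) (by rw [hxn]; linarith)
    rw [hgn, hnorm _ (by rw [hxn]; linarith), hxn, e.apply_symm_apply] at h1
    refine h1.trans ?_
    gcongr
    linarith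
end
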